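/- arXiv:0802.3434 — 2 statements merged into one kernel-verified Lean document; each statement's English description precedes it below -/
import Mathlib

section
/- With the covering numbers N(α,δ,n,ε) of the approximate level sets X_Φ(α,δ,n), the iterated limits defining Λ_Φ(α) exist and the limsup and liminf versions coincide: lim_{ε→0} lim_{δ→0} limsup_{n→∞} (1/n) log N(α,δ,n,ε) = lim_{ε→0} lim_{δ→0} liminf_{n→∞} (1/n) log N(α,δ,n,ε). -/
open MeasureTheory Filter Topology Set
open scoped ENNReal NNReal

/-!  General definitions: Bowen topological entropy (via covers by Bowen balls),
measure-theoretic (Kolmogorov–Sinai) entropy, generic points, saturated systems,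
and the specification property. -/

variable {X : Type*}

/-- The Bowen ball of center `x`, order `n`, radius `ε` (for the metric
`d_n(x,y) = max_{0 ≤ j < n} d(T^j x, T^j y)`). -/
def bowenBall [PseudoMetricSpace X] (T : X → X) (x : X) (n : ℕ) (ε : ℝ) : Set X :=
  {y | ∀ j < n, dist (T^[j] x) (T^[j] y) < ε}

/-- `H_n^s(Z,ε)`: infimum of `Σ_i exp(-s n_i)` over countable covers of `Z` by Bowen balls
`B_{n_i}(x_i,ε)` with all `n_i ≥ n`. -/
noncomputable def bowenH [PseudoMetricSpace X] (T : X → X) (Z : Set X) (s ε : ℝ) (n : ℕ) :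
    ℝ≥0∞ :=
  ⨅ (C : Set (X × ℕ)) (_ : C.Countable) (_ : ∀ p ∈ C, n ≤ p.2)
    (_ : Z ⊆ ⋃ p ∈ C, bowenBall T p.1 p.2 ε),
    ∑' p : C, ENNReal.ofReal (Real.exp (-s * ((p : X × ℕ).2 : ℝ)))

/-- `h_top(Z,ε)`: the critical exponent of `s ↦ H^s(Z,ε) = sup_n H_n^s(Z,ε)`. -/
noncomputable def bowenEntropyRes [PseudoMetricSpace X] (T : X → X) (Z : Set X) (ε : ℝ) :
    ℝ≥0∞ :=
  sInf ((fun s : ℝ≥0 => (s : ℝ≥0∞)) '' {s : ℝ≥0 | (⨆ n, bowenH T Z (s : ℝ) ε n) = 0})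

/-- Bowen topological entropy of a subset `Z`: `h_top(Z) = lim_{ε → 0} h_top(Z,ε)`
(the limit being a supremum by monotonicity in `ε`). -/
noncomputable def bowenEntropy [PseudoMetricSpace X] (T : X → X) (Z : Set X) : ℝ≥0∞ :=
  ⨆ (ε : ℝ) (_ : 0 < ε), bowenEntropyRes T Z ε

/-- Entropy of the partition `P ∨ T⁻¹P ∨ ⋯ ∨ T⁻⁽ⁿ⁻¹⁾P`, where a countable partition is
encoded as a function `P : X → ℕ`: it is the Shannon entropy of the map
`x ↦ (P x, P (T x), …, P (Tⁿ⁻¹ x))`. -/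
noncomputable def partInfo [MeasurableSpace X] (T : X → X) (μ : Measure X) (P : X → ℕ)
    (n : ℕ) : ℝ≥0∞ :=
  ∑' l : List ℕ, ENNReal.ofReal (Real.negMulLog
    ((μ ((fun x => (List.range n).map fun j => P (T^[j] x)) ⁻¹' {l})).toReal))

/-- Measure-theoretic (Kolmogorov–Sinai) entropy `h_μ(T)`: supremum over finite measurable
partitions `P` of `lim_n (1/n) H_μ(P ∨ T⁻¹P ∨ ⋯ ∨ T⁻⁽ⁿ⁻¹⁾P)` (the limit exists by
subadditivity, so it may be written as a `liminf`). -/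
noncomputable def ksEntropy [MeasurableSpace X] (T : X → X) (μ : Measure X) : ℝ≥0∞ :=
  ⨆ (P : X → ℕ) (_ : Measurable P) (_ : (Set.range P).Finite),
    Filter.atTop.liminf fun n : ℕ => partInfo T μ P n / (n : ℝ≥0∞)

/-- `x` is a generic point for `μ` : the empirical measures `(1/n) Σ_{j<n} δ_{T^j x}`
converge to `μ` in the weak-star topology, i.e. Birkhoff averages of every continuous
function converge to its integral. -/
def IsGeneric [TopologicalSpace X] [MeasurableSpace X] (T : X → X) (μ : Measure X)
    (x : X) : Prop :=
  ∀ f : C(X, ℝ), Tendsto (fun n : ℕ => (∑ j ∈ Finset.range n, f (T^[j] x)) / (n : ℝ))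
    atTop (𝓝 (∫ y, f y ∂μ))

/-- `μ ∈ V(x)` : `μ` is a weak-star limit point of the empirical measures of `x`. -/
def IsLimitMeasure [TopologicalSpace X] [MeasurableSpace X] (T : X → X) (x : X)
    (μ : Measure X) : Prop :=
  ∃ φ : ℕ → ℕ, StrictMono φ ∧ ∀ f : C(X, ℝ),
    Tendsto (fun m : ℕ => (∑ j ∈ Finset.range (φ m), f (T^[j] x)) / (φ m : ℝ))
      atTop (𝓝 (∫ y, f y ∂μ))

/-- A system is saturated if `h_top(G_μ) = h_μ` for every invariant Borel probability
measure `μ`. -/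
def Saturated [PseudoMetricSpace X] [MeasurableSpace X] (T : X → X) : Prop :=
  ∀ μ : Measure X, IsProbabilityMeasure μ → MeasurePreserving T μ μ →
    bowenEntropy T {x | IsGeneric T μ x} = ksEntropy T μ

/-- The specification property. -/
def SpecificationProperty [PseudoMetricSpace X] (T : X → X) : Prop :=
  ∀ ε : ℝ, 0 < ε → ∃ m : ℕ, 1 ≤ m ∧
    ∀ k : ℕ, 2 ≤ k → ∀ x : ℕ → X, ∀ a b : ℕ → ℕ,
      (∀ i < k, a i ≤ b i) →
      (∀ i, i + 1 < k → b i + m ≤ a (i + 1)) →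
      ∃ y : X, ∀ i < k, ∀ n ≤ b i - a i,
        dist (T^[a i + n] y) (T^[n] (x i)) < ε

/-- The Birkhoff average `A_n f(x) = (1/n) Σ_{j<n} f(T^j x)` of a real function. -/
noncomputable def birkhoffAvgR {X : Type*} (T : X → X) (f : X → ℝ) (n : ℕ) (x : X) : ℝ :=
  (∑ j ∈ Finset.range n, f (T^[j] x)) / (n : ℝ)

/-- The approximate level set `X_Φ(α,δ,n) = {x : Σ_i p_i |A_nΦ_i(x) - α_i| < δ}`. -/
def levelSet {X : Type*} (T : X → X) (Φ : ℕ → X → ℝ) (p α : ℕ → ℝ) (δ : ℝ) (n : ℕ) :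
    Set X :=
  {x | (∑' i : ℕ, p i * |birkhoffAvgR T (Φ i) n x - α i|) < δ}

/-- `N(S,n,ε)`: the minimal number of Bowen balls `B_n(x,ε)` needed to cover `S`. -/
noncomputable def coverNum {X : Type*} [PseudoMetricSpace X] (T : X → X) (S : Set X)
    (n : ℕ) (ε : ℝ) : ℕ :=
  sInf {m : ℕ | ∃ F : Finset X, F.card = m ∧ S ⊆ ⋃ x ∈ F, bowenBall T x n ε}

/-- `Λ_Φ(α) = lim_{ε→0} lim_{δ→0} limsup_n (1/n) log N(α,δ,n,ε)`; the limit in `ε` is an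
increasing limit (a supremum) and the limit in `δ` is a decreasing limit (an infimum). -/
noncomputable def LambdaPhi {X : Type*} [PseudoMetricSpace X] (T : X → X)
    (Φ : ℕ → X → ℝ) (p α : ℕ → ℝ) : ℝ≥0∞ :=
  ⨆ (ε : ℝ) (_ : 0 < ε), ⨅ (δ : ℝ) (_ : 0 < δ),
    Filter.atTop.limsup fun n : ℕ =>
      ENNReal.ofReal (Real.log (coverNum T (levelSet T Φ p α δ n) n ε) / (n : ℝ))

lemma bowenBall_mem_nhds {X : Type*} [PseudoMetricSpace X] {T : X → X} (hT : Continuous T)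
    (x : X) (n : ℕ) {ε : ℝ} (hε : 0 < ε) : bowenBall T x n ε ∈ 𝓝 x := by
  have h : ∀ j ∈ Finset.range n, ∀ᶠ y in 𝓝 x, dist (T^[j] x) (T^[j] y) < ε := by
    intro j _
    have hc : Continuous fun y => dist (T^[j] x) (T^[j] y) :=
      continuous_const.dist (hT.iterate j)
    exact hc.continuousAt.eventually_lt continuousAt_const (by simpa using hε)
  filter_upwards [(Filter.eventually_all_finset _).2 h] with y hy j hj
  exact hy j (Finset.mem_range.2 hj)

lemma exists_bowenBall_cover {X : Type*} [PseudoMetricSpace X] [CompactSpace X] {T : X → X}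
    (hT : Continuous T) (S : Set X) (n : ℕ) {ε : ℝ} (hε : 0 < ε) :
    ∃ F : Finset X, F.card = coverNum T S n ε ∧ S ⊆ ⋃ x ∈ F, bowenBall T x n ε := by
  have hne : {m : ℕ | ∃ F : Finset X, F.card = m ∧ S ⊆ ⋃ x ∈ F, bowenBall T x n ε}.Nonempty := by
    obtain ⟨F, -, hF⟩ := isCompact_univ.elim_nhds_subcover
      (fun x => bowenBall T x n ε) (fun x _ => bowenBall_mem_nhds hT x n hε)
    exact ⟨_, F, rfl, (subset_univ S).trans hF⟩
  exact Nat.sInf_mem hne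

lemma coverNum_le {X : Type*} [PseudoMetricSpace X] {T : X → X} {S : Set X} {n : ℕ} {ε : ℝ}
    {F : Finset X} (hF : S ⊆ ⋃ x ∈ F, bowenBall T x n ε) : coverNum T S n ε ≤ F.card :=
  Nat.sInf_le ⟨F, rfl, hF⟩

lemma coverNum_mono {X : Type*} [PseudoMetricSpace X] [CompactSpace X] {T : X → X}
    (hT : Continuous T) {S S' : Set X} (hS : S ⊆ S') (n : ℕ) {ε ε' : ℝ} (hε : 0 < ε)
    (hεε' : ε ≤ ε') : coverNum T S n ε' ≤ coverNum T S' n ε := by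
  obtain ⟨F, hF, hcov⟩ := exists_bowenBall_cover hT S' n hε
  rw [← hF]
  refine coverNum_le (hS.trans (hcov.trans ?_))
  exact iUnion₂_mono fun x _ y hy j hj => (hy j hj).trans_le hεε'

lemma exists_separated_of_le_coverNum {X : Type*} [PseudoMetricSpace X] {T : X → X}
    {S : Set X} {n : ℕ} {ε : ℝ} (hε : 0 < ε) (c : ℕ)
    (hc : c ≤ coverNum T S n ε) :
    ∃ E : Finset X, E.card = c ∧ (∀ x ∈ E, x ∈ S) ∧
      ∀ x ∈ E, ∀ y ∈ E, x ≠ y → ∃ s < n, ε ≤ dist (T^[s] x) (T^[s] y) := by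
  classical
  induction c with
  | zero => exact ⟨∅, by simp⟩
  | succ c ih =>
    obtain ⟨E, hcard, hES, hsep⟩ := ih (by omega)
    have hnot : ¬ S ⊆ ⋃ x ∈ E, bowenBall T x n ε := fun h => by
      have := coverNum_le h
      omega
    obtain ⟨z, hzS, hz⟩ := not_subset.1 hnot
    have hz' : ∀ x ∈ E, ∃ s < n, ε ≤ dist (T^[s] x) (T^[s] z) := by
      intro x hx
      by_contra! hcon
      exact hz (mem_iUnion₂.2 ⟨x, hx, hcon⟩)
    have hzE : z ∉ E := fun h => by
      obtain ⟨s, -, hs⟩ := hz' z h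
      rw [dist_self] at hs
      linarith
    refine ⟨insert z E, by rw [Finset.card_insert_of_notMem hzE, hcard], ?_, ?_⟩
    · intro x hx
      rcases Finset.mem_insert.1 hx with rfl | hx
      exacts [hzS, hES x hx]
    · intro x hx y hy hxy
      rcases Finset.mem_insert.1 hx with rfl | hxE <;>
        rcases Finset.mem_insert.1 hy with rfl | hyE
      · exact absurd rfl hxy
      · obtain ⟨s, hs, h⟩ := hz' y hyE
        exact ⟨s, hs, by rwa [dist_comm]⟩
      · exact hz' x hxE
      · exact hsep x hxE y hyE hxy

lemma SpecificationProperty.exists_shadowing {X : Type*} [PseudoMetricSpace X] {T : X → X}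
    (hspec : SpecificationProperty T) {η : ℝ} (hη : 0 < η) :
    ∃ m : ℕ, ∀ n k : ℕ, 0 < n → 2 ≤ k → ∀ x : ℕ → X,
      ∃ y : X, ∀ i < k, ∀ s < n, dist (T^[i * (n + m) + s] y) (T^[s] (x i)) < η := by
  obtain ⟨m, -, hm⟩ := hspec η hη
  refine ⟨m, fun n k hn hk x => ?_⟩
  obtain ⟨y, hy⟩ := hm k hk x (fun i => i * (n + m)) (fun i => i * (n + m) + (n - 1))
    (fun i _ => by omega) (fun i _ => by
      simp only [add_mul, one_mul]
      omega)
  exact ⟨y, fun i hi s hs => hy i hi s (by omega)⟩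

lemma coverNum_pow_le {X : Type*} [PseudoMetricSpace X] [CompactSpace X] {T : X → X}
    (hT : Continuous T) {S S' : Set X} {n k l N : ℕ} {ε η : ℝ} (hk : 0 < k)
    (hnl : n ≤ l) (hN : k * l ≤ N) (hε : 0 < ε) (hη : η ≤ ε / 4)
    (hshadow : ∀ x : ℕ → X, (∀ i, x i ∈ S) →
      ∃ y ∈ S', ∀ i < k, ∀ s < n, dist (T^[i * l + s] y) (T^[s] (x i)) < η) :
    coverNum T S n ε ^ k ≤ coverNum T S' N (ε / 4) := by
  classical
  obtain ⟨E, hcard, hES, hsep⟩ := exists_separated_of_le_coverNum hε _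
    (le_refl (coverNum T S n ε))
  obtain ⟨F, hF, hcov⟩ := exists_bowenBall_cover hT S' N (by linarith : 0 < ε / 4)
  have hw : ∀ w : Fin k → E, ∃ c : F, ∃ y ∈ bowenBall T (c : X) N (ε / 4),
      ∀ i : Fin k, ∀ s < n, dist (T^[i * l + s] y) (T^[s] (w i)) < η := by
    intro w
    obtain ⟨y, hyS, hy⟩ := hshadow (fun i => w ⟨i % k, Nat.mod_lt _ hk⟩)
      (fun i => hES _ (w _).2)
    obtain ⟨c, hc, hyc⟩ := mem_iUnion₂.1 (hcov hyS)
    refine ⟨⟨c, hc⟩, y, hyc, fun i s hs => ?_⟩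
    have := hy i i.2 s hs
    simpa only [Nat.mod_eq_of_lt i.2] using this
  choose c y hyc hy using hw
  have hinj : Function.Injective c := by
    intro w w' h
    funext i
    by_contra hne
    obtain ⟨s, hs, hd⟩ := hsep _ (w i).2 _ (w' i).2 (fun h => hne (Subtype.ext h))
    have hlt : (i : ℕ) * l + s < N := by
      have h1 : ((i : ℕ) + 1) * l ≤ k * l := Nat.mul_le_mul_right _ i.2
      rw [add_mul, one_mul] at h1
      omega
    have h1 := hyc w _ hlt
    have h2 := hyc w' _ hlt
    rw [← h] at h2
    have h3 := hy w i s hs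
    have h4 := hy w' i s hs
    rw [dist_comm] at h1 h3
    have h5 := dist_triangle4 (T^[s] (w i : X)) (T^[i * l + s] (y w)) (T^[i * l + s] (c w : X))
      (T^[s] (w' i : X))
    have h6 := dist_triangle (T^[i * l + s] (c w : X)) (T^[i * l + s] (y w')) (T^[s] (w' i : X))
    linarith
  have := Fintype.card_le_of_injective c hinj
  rw [Fintype.card_fun, Fintype.card_coe, Fintype.card_coe, Fintype.card_fin] at this
  rwa [hcard, hF] at this

lemma norm_sum_range_mul_le {E : Type*} [SeminormedAddCommGroup E] (W : ℕ → E) (l : ℕ) (B : ℝ)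
    (k : ℕ) (hB : ∀ j < k, ‖∑ s ∈ Finset.range l, W (j * l + s)‖ ≤ B) :
    ‖∑ t ∈ Finset.range (k * l), W t‖ ≤ k * B := by
  induction k with
  | zero => simp
  | succ k ih =>
    rw [add_mul, one_mul, Finset.sum_range_add]
    refine (norm_add_le _ _).trans ?_
    have h1 := ih fun j hj => hB j (by omega)
    have h2 := hB k (by omega)
    push_cast
    linarith

lemma norm_sum_sub_le_of_shadowing {X E : Type*} [SeminormedAddCommGroup E] {T : X → X}
    {V : X → E} {a : E} {C : ℝ} (hVa : ∀ u, ‖V u - a‖ ≤ C) {n m k N : ℕ} {D κ : ℝ}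
    (hN : k * (n + m) ≤ N) (hN' : N ≤ k * (n + m) + (n + m)) {x : ℕ → X} {y : X}
    (hx : ∀ j < k, ‖∑ s ∈ Finset.range n, (V (T^[s] (x j)) - a)‖ ≤ n * D)
    (hy : ∀ j < k, ∀ s < n, ‖V (T^[j * (n + m) + s] y) - V (T^[s] (x j))‖ ≤ κ) :
    ‖∑ t ∈ Finset.range N, (V (T^[t] y) - a)‖ ≤
      k * (n * (D + κ) + m * C) + (n + m) * C := by
  obtain ⟨r, rfl⟩ := Nat.exists_eq_add_of_le hN
  have hC : 0 ≤ C := (norm_nonneg _).trans (hVa y)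
  have htail : ∀ (r q : ℕ), ‖∑ s ∈ Finset.range r, (V (T^[q + s] y) - a)‖ ≤ r * C := by
    intro r q
    refine (norm_sum_le_of_le _ fun s _ => hVa _).trans ?_
    simp
  rw [Finset.sum_range_add]
  refine (norm_add_le _ _).trans (add_le_add ?_ ((htail _ _).trans ?_))
  · refine norm_sum_range_mul_le (fun t => V (T^[t] y) - a) (n + m) _ k fun j hj => ?_
    rw [Finset.sum_range_add]
    refine (norm_add_le _ _).trans (add_le_add ?_ ?_)
    · have : ∑ s ∈ Finset.range n, (V (T^[j * (n + m) + s] y) - a) =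
          ∑ s ∈ Finset.range n, (V (T^[s] (x j)) - a) +
          ∑ s ∈ Finset.range n, (V (T^[j * (n + m) + s] y) - V (T^[s] (x j))) := by
        rw [← Finset.sum_add_distrib]
        exact Finset.sum_congr rfl fun s _ => by abel
      rw [this, mul_add (n : ℝ)]
      refine (norm_add_le _ _).trans (add_le_add (hx j hj) ?_)
      refine (norm_sum_le_of_le _ fun s hs => hy j hj s (Finset.mem_range.1 hs)).trans ?_
      simp
    · simpa only [add_assoc] using htail m (j * (n + m) + n)
  · refine mul_le_mul_of_nonneg_right ?_ hC
    exact_mod_cast (by omega : r ≤ n + m)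

/-- Points whose time-`n` Birkhoff average of the vector-valued observable `V` is `δ`-close
to `a`. -/
def vectorLevelSet {X E : Type*} [NormedAddCommGroup E] [NormedSpace ℝ E] (T : X → X)
    (V : X → E) (a : E) (δ : ℝ) (n : ℕ) : Set X :=
  {x | ‖(n : ℝ)⁻¹ • (∑ j ∈ Finset.range n, V (T^[j] x)) - a‖ < δ}

lemma mem_vectorLevelSet_iff {X E : Type*} [NormedAddCommGroup E] [NormedSpace ℝ E] {T : X → X}
    {V : X → E} {a : E} {δ : ℝ} {n : ℕ} (hn : 0 < n) {x : X} :
    x ∈ vectorLevelSet T V a δ n ↔ ‖∑ j ∈ Finset.range n, (V (T^[j] x) - a)‖ < n * δ := by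
  have hn' : (0 : ℝ) < n := by exact_mod_cast hn
  have : (n : ℝ)⁻¹ • (∑ j ∈ Finset.range n, V (T^[j] x)) - a =
      (n : ℝ)⁻¹ • ∑ j ∈ Finset.range n, (V (T^[j] x) - a) := by
    rw [Finset.sum_sub_distrib, smul_sub, Finset.sum_const, Finset.card_range,
      ← Nat.cast_smul_eq_nsmul ℝ, inv_smul_smul₀ hn'.ne']
  rw [vectorLevelSet, mem_ofPred_eq, this, norm_smul, norm_inv, Real.norm_natCast,
    inv_mul_lt_iff₀ hn']

/-- The exponential rate `(1/n) log N(S,n,ε)`. -/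
noncomputable def coverRate {X : Type*} [PseudoMetricSpace X] (T : X → X) (S : Set X)
    (n : ℕ) (ε : ℝ) : ℝ≥0∞ :=
  ENNReal.ofReal (Real.log (coverNum T S n ε) / (n : ℝ))

lemma coverRate_mono {X : Type*} [PseudoMetricSpace X] [CompactSpace X] {T : X → X}
    (hT : Continuous T) {S S' : Set X} (hS : S ⊆ S') (n : ℕ) {ε ε' : ℝ} (hε : 0 < ε)
    (hεε' : ε ≤ ε') : coverRate T S n ε' ≤ coverRate T S' n ε := by
  have h := coverNum_mono hT hS n hε hεε'
  refine ENNReal.ofReal_le_ofReal (div_le_div_of_nonneg_right ?_ n.cast_nonneg)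
  rcases Nat.eq_zero_or_pos (coverNum T S n ε') with h0 | h0
  · rw [h0]
    simpa using Real.log_natCast_nonneg _
  · exact Real.log_le_log (by exact_mod_cast h0) (by exact_mod_cast h)

lemma ofReal_div_le_liminf_of_mul_le {f : ℕ → ℝ} {l : ℕ} (hl : 0 < l) {L : ℝ} (hL : 0 ≤ L)
    (h : ∀ᶠ N : ℕ in atTop, ((N / l : ℕ) : ℝ) * L ≤ f N) :
    ENNReal.ofReal (L / l) ≤ atTop.liminf fun N : ℕ => ENNReal.ofReal (f N / N) := by
  have hl' : (0 : ℝ) < l := by exact_mod_cast hl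
  have hlim : Tendsto (fun N : ℕ => L / l - L / N) atTop (𝓝 (L / l)) := by
    simpa using tendsto_const_nhds.sub (tendsto_const_div_atTop_nhds_zero_nat L)
  rw [← (ENNReal.tendsto_ofReal hlim).liminf_eq]
  refine liminf_le_liminf ?_
  filter_upwards [h, eventually_gt_atTop 0] with N hN hN0
  refine ENNReal.ofReal_le_ofReal ?_
  have hN0' : (0 : ℝ) < N := by exact_mod_cast hN0
  rw [le_div_iff₀ hN0']
  refine le_trans ?_ hN
  have h1 : (N : ℝ) ≤ ((N / l : ℕ) + 1) * l := by
    exact_mod_cast (Nat.lt_mul_of_div_lt (Nat.lt_succ_self _) hl).le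
  have h2 : (N : ℝ) / l - 1 ≤ (N / l : ℕ) := by
    rw [sub_le_iff_le_add, div_le_iff₀ hl']
    exact h1
  calc (L / l - L / N) * N = ((N : ℝ) / l - 1) * L := by field_simp
    _ ≤ _ := mul_le_mul_of_nonneg_right h2 hL

lemma limsup_le_of_ofReal_div_add_le {L : ℕ → ℝ} (m : ℕ) {c : ℝ≥0∞}
    (h : ∀ᶠ n : ℕ in atTop, ENNReal.ofReal (L n / (n + m : ℕ)) ≤ c) :
    (atTop.limsup fun n : ℕ => ENNReal.ofReal (L n / n)) ≤ c := by
  have hlim : Tendsto (fun n : ℕ => 1 + (m : ℝ) / n) atTop (𝓝 1) := by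
    simpa using tendsto_const_nhds.add (tendsto_const_div_atTop_nhds_zero_nat (m : ℝ))
  have hlim' : Tendsto (fun n : ℕ => c * ENNReal.ofReal (1 + (m : ℝ) / n)) atTop (𝓝 c) := by
    simpa using ENNReal.Tendsto.const_mul (a := c) (ENNReal.tendsto_ofReal hlim) (by simp)
  rw [← hlim'.limsup_eq]
  refine limsup_le_limsup ?_
  filter_upwards [h, eventually_gt_atTop 0] with n hn hn0
  have hn0' : (0 : ℝ) < n := by exact_mod_cast hn0
  have : L n / n = L n / (n + m : ℕ) * (1 + (m : ℝ) / n) := by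
    push_cast
    field_simp
  rw [this, ENNReal.ofReal_mul' (by positivity)]
  gcongr

lemma exists_limsup_coverRate_le_liminf {X E : Type*} [PseudoMetricSpace X] [CompactSpace X]
    [NormedAddCommGroup E] [NormedSpace ℝ E] {T : X → X} (hT : Continuous T)
    (hspec : SpecificationProperty T) {V : X → E} (hV : Continuous V) (a : E) {ε δ : ℝ}
    (hε : 0 < ε) (hδ : 0 < δ) :
    ∃ δ' > 0, (atTop.limsup fun n => coverRate T (vectorLevelSet T V a δ' n) n ε) ≤
      atTop.liminf fun n => coverRate T (vectorLevelSet T V a δ n) n (ε / 4) := by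
  obtain ⟨C, hC0, hVa⟩ : ∃ C > 0, ∀ u, ‖V u - a‖ ≤ C := by
    obtain ⟨C, hC⟩ := isCompact_univ.exists_bound_of_continuousOn
      (hV.sub continuous_const : Continuous fun u => V u - a).continuousOn
    exact ⟨max C 1, by positivity, fun u => (hC u (mem_univ u)).trans (le_max_left _ _)⟩
  obtain ⟨η', hη', hVη⟩ := Metric.uniformContinuous_iff.1
    (CompactSpace.uniformContinuous_of_continuous hV) (δ / 4) (by positivity)
  set η := min η' (ε / 4)
  have hη0 : 0 < η := by positivity
  obtain ⟨m, hm⟩ := hspec.exists_shadowing hη0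
  refine ⟨δ / 4, by positivity, ?_⟩
  unfold coverRate
  refine limsup_le_of_ofReal_div_add_le m ?_
  have hev : ∀ c : ℝ, ∀ᶠ n : ℕ in atTop, c < n * (δ / 8) := fun c =>
    (tendsto_natCast_atTop_atTop.atTop_mul_const (by positivity)).eventually_gt_atTop c
  filter_upwards [hev (m * C), eventually_gt_atTop 0] with n hn hn0
  refine ofReal_div_le_liminf_of_mul_le (by omega) (Real.log_natCast_nonneg _) ?_
  filter_upwards [hev ((n + m) * C), eventually_ge_atTop (2 * (n + m))] with N hN hN2
  set k := N / (n + m)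
  have hk2 : 2 ≤ k := (Nat.le_div_iff_mul_le (by omega)).2 hN2
  have hkN : k * (n + m) ≤ N := Nat.div_mul_le_self _ _
  have hkN' : N ≤ k * (n + m) + (n + m) := by
    have := Nat.lt_mul_of_div_lt (Nat.lt_succ_self (N / (n + m))) (by omega : 0 < n + m)
    rw [Nat.succ_mul] at this
    exact this.le
  rcases Nat.eq_zero_or_pos (coverNum T (vectorLevelSet T V a (δ / 4) n) n ε) with h0 | h0
  · simpa [h0] using Real.log_natCast_nonneg _
  have hpow : coverNum T (vectorLevelSet T V a (δ / 4) n) n ε ^ k ≤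
      coverNum T (vectorLevelSet T V a δ N) N (ε / 4) := by
    refine coverNum_pow_le hT (by omega) (Nat.le_add_right n m) hkN hε (min_le_right η' _) ?_
    intro x hx
    obtain ⟨y, hy⟩ := hm n k hn0 hk2 x
    refine ⟨y, ?_, hy⟩
    rw [mem_vectorLevelSet_iff (by omega)]
    have hb := norm_sum_sub_le_of_shadowing hVa hkN hkN' (D := δ / 4) (κ := δ / 4)
      (fun j _ => ((mem_vectorLevelSet_iff hn0).1 (hx j)).le)
      (fun j hj s hs => by
        rw [← dist_eq_norm]
        exact (hVη ((hy j hj s hs).trans_le (min_le_left _ _))).le)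
    have hkn : (k : ℝ) * n ≤ N := by
      exact_mod_cast (Nat.mul_le_mul_left k (Nat.le_add_right n m)).trans hkN
    have hk0 : (0 : ℝ) ≤ k := k.cast_nonneg
    have hNpos : (0 : ℝ) < N := by exact_mod_cast (by omega : 0 < N)
    have h1 : (k : ℝ) * (m * C) ≤ k * (n * (δ / 8)) := mul_le_mul_of_nonneg_left hn.le hk0
    have h2 : (k : ℝ) * n * δ ≤ N * δ := mul_le_mul_of_nonneg_right hkn hδ.le
    have h3 : 0 < N * δ := mul_pos hNpos hδ
    linarith
  rw [← Real.log_pow]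
  exact Real.log_le_log (by positivity) (by exact_mod_cast hpow)

lemma memℓp_one_mul_of_bounded {p v : ℕ → ℝ} (hp : ∀ i, 0 < p i) (hps : Summable p) {C : ℝ}
    (hv : ∀ i, |v i| ≤ C) : Memℓp (fun i => p i * v i) 1 := by
  refine memℓp_gen ?_
  simp only [ENNReal.toReal_one, Real.rpow_one, norm_mul, Real.norm_eq_abs]
  refine Summable.of_nonneg_of_le (fun i => by positivity) (fun i => ?_) (hps.mul_right C)
  rw [abs_of_pos (hp i)]
  exact mul_le_mul_of_nonneg_left (hv i) (hp i).le

lemma lp_one_norm_eq_tsum (v : lp (fun _ : ℕ => ℝ) 1) : ‖v‖ = ∑' i, |v i| := by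
  rw [lp.norm_eq_tsum_rpow (by simp)]
  simp

lemma exists_vectorLevelSet_eq_levelSet {X : Type*} [TopologicalSpace X] (T : X → X)
    {Φ : ℕ → X → ℝ} (hΦc : ∀ i, Continuous (Φ i)) (hΦb : ∀ i x, |Φ i x| ≤ 1)
    {p : ℕ → ℝ} (hp : ∀ i, 0 < p i) (hps : Summable p) {α : ℕ → ℝ}
    (hα : ∃ C : ℝ, ∀ i, |α i| ≤ C) :
    ∃ (V : X → lp (fun _ : ℕ => ℝ) 1) (a : lp (fun _ : ℕ => ℝ) 1), Continuous V ∧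
      ∀ δ n, levelSet T Φ p α δ n = vectorLevelSet T V a δ n := by
  obtain ⟨C, hC⟩ := hα
  let V : X → lp (fun _ : ℕ => ℝ) 1 := fun u =>
    ⟨fun i => p i * Φ i u, memℓp_one_mul_of_bounded hp hps fun i => hΦb i u⟩
  let a : lp (fun _ : ℕ => ℝ) 1 := ⟨fun i => p i * α i, memℓp_one_mul_of_bounded hp hps hC⟩
  refine ⟨V, a, ?_, fun δ n => ?_⟩
  · rw [continuous_iff_continuousAt]
    intro u
    rw [ContinuousAt, tendsto_iff_norm_sub_tendsto_zero]
    have hnorm : ∀ v, ‖V v - V u‖ = ∑' i, p i * |Φ i v - Φ i u| := fun v => by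
      rw [lp_one_norm_eq_tsum]
      refine tsum_congr fun i => ?_
      change |p i * Φ i v - p i * Φ i u| = _
      rw [← mul_sub, abs_mul, abs_of_pos (hp i)]
    simp only [hnorm]
    have hcont : Continuous fun v => ∑' i, p i * |Φ i v - Φ i u| := by
      refine continuous_tsum (fun i => ?_) (hps.mul_right 2) fun i v => ?_
      · exact continuous_const.mul ((hΦc i).sub continuous_const).abs
      · rw [Real.norm_eq_abs, abs_mul, abs_of_pos (hp i), abs_abs]
        refine mul_le_mul_of_nonneg_left ?_ (hp i).le
        have := abs_sub (Φ i v) (Φ i u)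
        linarith [hΦb i v, hΦb i u]
    simpa using hcont.tendsto u
  · ext x
    rw [levelSet, vectorLevelSet, mem_ofPred_eq, mem_ofPred_eq, lp_one_norm_eq_tsum]
    refine iff_of_eq (congrArg (· < δ) (tsum_congr fun i => ?_))
    have : ((n : ℝ)⁻¹ • (∑ j ∈ Finset.range n, V (T^[j] x)) - a) i =
        p i * (birkhoffAvgR T (Φ i) n x - α i) := by
      rw [lp.coeFn_sub, Pi.sub_apply, lp.coeFn_smul, Pi.smul_apply, lp.coeFn_sum,
        Finset.sum_apply, smul_eq_mul, birkhoffAvgR, mul_sub, div_eq_inv_mul]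
      change (n : ℝ)⁻¹ * ∑ j ∈ Finset.range n, p i * Φ i (T^[j] x) - p i * α i = _
      rw [← Finset.mul_sum]
      ring
    rw [this, abs_mul, abs_of_pos (hp i)]

lemma levelSet_mono {X : Type*} (T : X → X) (Φ : ℕ → X → ℝ) (p α : ℕ → ℝ) (n : ℕ) :
    Monotone fun δ => levelSet T Φ p α δ n :=
  fun _ _ h _ hx => lt_of_lt_of_le hx h

/-- The iterated limit as `δ → 0` and then `ε → 0` exists for a quantity monotone in `δ` and
antitone in `ε`. -/
lemma exists_iterated_tendsto {g : ℝ → ℝ → ℝ≥0∞} (hmono : ∀ ε, 0 < ε → Monotone (g ε))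
    (hanti : ∀ ε ε' δ, 0 < ε → ε ≤ ε' → g ε' δ ≤ g ε δ) :
    ∃ F : ℝ → ℝ≥0∞, (∀ ε, 0 < ε → F ε = ⨅ δ ∈ Ioi (0 : ℝ), g ε δ) ∧
      (∀ ε, 0 < ε → Tendsto (g ε) (𝓝[>] 0) (𝓝 (F ε))) ∧
      Tendsto F (𝓝[>] 0) (𝓝 (⨆ ε ∈ Ioi (0 : ℝ), F ε)) := by
  let F : ℝ → ℝ≥0∞ := fun ε => if 0 < ε then ⨅ δ ∈ Ioi (0 : ℝ), g ε δ else ⊤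
  have hF : ∀ ε, 0 < ε → F ε = ⨅ δ ∈ Ioi (0 : ℝ), g ε δ := fun ε hε => if_pos hε
  refine ⟨F, hF, fun ε hε => ?_, ?_⟩
  · rw [hF ε hε, ← sInf_image]
    exact (hmono ε hε).tendsto_nhdsGT 0
  · rw [← sSup_image]
    have hFa : Antitone F := by
      intro ε ε' h
      by_cases hε : 0 < ε
      · rw [hF ε hε, hF ε' (hε.trans_le h)]
        exact iInf₂_mono fun δ _ => hanti ε ε' δ hε h
      · exact le_top.trans_eq (if_neg hε).symm
    exact hFa.tendsto_nhdsGT 0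

/-- The iterated limits defining `Λ_Φ(α)` exist and the `limsup` and `liminf` versions
coincide: `lim_{ε→0} lim_{δ→0} limsup_n (1/n) log N(α,δ,n,ε)
= lim_{ε→0} lim_{δ→0} liminf_n (1/n) log N(α,δ,n,ε)`. -/
theorem lambda_limits_exist {X : Type*} [MetricSpace X] [CompactSpace X]
    [MeasurableSpace X] [BorelSpace X] (T : X → X) (hT : Continuous T)
    (hspec : SpecificationProperty T)
    (Φ : ℕ → X → ℝ) (hΦc : ∀ i, Continuous (Φ i)) (hΦb : ∀ i x, |Φ i x| ≤ 1)
    (hdense : ∀ f : C(X, ℝ), ‖f‖ ≤ 1 → ∀ ε : ℝ, 0 < ε → ∃ i, ∀ x, |Φ i x - f x| < ε)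
    (p : ℕ → ℝ) (hp : ∀ i, 0 < p i) (hps : Summable p) (hp1 : ∑' i, p i = 1)
    (α : ℕ → ℝ) (hα : ∃ C : ℝ, ∀ i, |α i| ≤ C) :
    ∃ (F G : ℝ → ℝ≥0∞) (Ls Li : ℝ≥0∞),
      (∀ ε : ℝ, 0 < ε → Tendsto (fun δ : ℝ =>
            Filter.atTop.limsup fun n : ℕ =>
              ENNReal.ofReal (Real.log (coverNum T (levelSet T Φ p α δ n) n ε) / (n : ℝ)))
          (𝓝[>] 0) (𝓝 (F ε))) ∧
      Tendsto F (𝓝[>] (0 : ℝ)) (𝓝 Ls) ∧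
      (∀ ε : ℝ, 0 < ε → Tendsto (fun δ : ℝ =>
            Filter.atTop.liminf fun n : ℕ =>
              ENNReal.ofReal (Real.log (coverNum T (levelSet T Φ p α δ n) n ε) / (n : ℝ)))
          (𝓝[>] 0) (𝓝 (G ε))) ∧
      Tendsto G (𝓝[>] (0 : ℝ)) (𝓝 Li) ∧ Ls = Li := by
  obtain ⟨V, a, hV, hlev⟩ := exists_vectorLevelSet_eq_levelSet T hΦc hΦb hp hps hα
  have hδ : ∀ ε, 0 < ε → ∀ δ δ' : ℝ, δ ≤ δ' → ∀ n, coverRate T (levelSet T Φ p α δ n) n ε ≤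
      coverRate T (levelSet T Φ p α δ' n) n ε := fun ε hε δ δ' h n =>
    coverRate_mono hT (levelSet_mono T Φ p α n h) n hε le_rfl
  have hε : ∀ ε ε' δ : ℝ, 0 < ε → ε ≤ ε' → ∀ n, coverRate T (levelSet T Φ p α δ n) n ε' ≤
      coverRate T (levelSet T Φ p α δ n) n ε := fun ε ε' δ h h' n =>
    coverRate_mono hT Subset.rfl n h h'
  obtain ⟨F, hF, hFδ, hFε⟩ := exists_iterated_tendsto
    (g := fun ε δ => atTop.limsup fun n => coverRate T (levelSet T Φ p α δ n) n ε)
    (fun ε h δ δ' h' => limsup_le_limsup (Eventually.of_forall (hδ ε h δ δ' h')))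
    (fun ε ε' δ h h' => limsup_le_limsup (Eventually.of_forall (hε ε ε' δ h h')))
  obtain ⟨G, hG, hGδ, hGε⟩ := exists_iterated_tendsto
    (g := fun ε δ => atTop.liminf fun n => coverRate T (levelSet T Φ p α δ n) n ε)
    (fun ε h δ δ' h' => liminf_le_liminf (Eventually.of_forall (hδ ε h δ δ' h')))
    (fun ε ε' δ h h' => liminf_le_liminf (Eventually.of_forall (hε ε ε' δ h h')))
  refine ⟨F, G, _, _, hFδ, hFε, hGδ, hGε, le_antisymm ?_ ?_⟩
  · refine iSup₂_le fun ε (h : 0 < ε) => ?_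
    have h4 : 0 < ε / 4 := by positivity
    refine le_trans ?_ (le_iSup₂ (f := fun ε (_ : ε ∈ Ioi (0 : ℝ)) => G ε) (ε / 4) h4)
    rw [hF ε h, hG _ h4]
    refine le_iInf₂ fun δ hδ0 => ?_
    obtain ⟨δ', hδ', hle⟩ := exists_limsup_coverRate_le_liminf hT hspec hV a h hδ0
    simp only [← hlev] at hle
    exact (iInf₂_le δ' hδ').trans hle
  · refine iSup₂_mono fun ε (h : 0 < ε) => ?_
    rw [hF ε h, hG ε h]
    exact iInf₂_mono fun δ _ => liminf_le_limsup
end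

section
/- Let (X,T) be a saturated dynamical system, I a finite or countable set of positive integers, and (Φ_i)_{i∈I} real continuous functions on X with sup_{i∈I} ‖Φ_i‖_∞ < ∞. Given real sequences a = (a_i)_{i∈I} and b = (b_i)_{i∈I}, let S(a,b) be the set of x ∈ X such that a_i ≤ liminf_{n→∞} A_nΦ_i(x) ≤ limsup_{n→∞} A_nΦ_i(x) ≤ b_i for all i ∈ I. Then the Bowen topological entropy of S(a,b) equals the supremum of h_μ over all T-invariant Borel probability measures μ satisfying a_i ≤ ∫ Φ_i dμ ≤ b_i for all i ∈ I. -/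
open MeasureTheory Filter Topology Set
open scoped ENNReal NNReal

/-!  General definitions: Bowen topological entropy (via covers by Bowen balls),
measure-theoretic (Kolmogorov–Sinai) entropy, generic points, saturated systems,
and the specification property. -/

variable {X : Type*}

/-! ### Bowen entropy: monotonicity, countable unions, explicit covers -/

theorem bowenH_mono [PseudoMetricSpace X] (T : X → X) {Y Z : Set X} (h : Y ⊆ Z) (s ε : ℝ)
    (n : ℕ) : bowenH T Y s ε n ≤ bowenH T Z s ε n := by
  unfold bowenH
  refine iInf_mono fun C => iInf_mono fun _ => iInf_mono fun _ => ?_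
  exact le_iInf fun hZ => iInf_le_of_le (h.trans hZ) le_rfl

theorem bowenEntropy_mono [PseudoMetricSpace X] (T : X → X) {Y Z : Set X} (h : Y ⊆ Z) :
    bowenEntropy T Y ≤ bowenEntropy T Z := by
  unfold bowenEntropy bowenEntropyRes
  refine iSup_mono fun ε => iSup_mono fun _ => sInf_le_sInf (image_mono fun s hs => ?_)
  exact le_antisymm ((iSup_mono fun n => bowenH_mono T h s ε n).trans hs.le) zero_le

theorem bowenH_le_of_cover [PseudoMetricSpace X] (T : X → X) {Z : Set X} (s ε : ℝ) (n : ℕ)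
    {C : Set (X × ℕ)} (hC : C.Countable) (hn : ∀ p ∈ C, n ≤ p.2)
    (hZ : Z ⊆ ⋃ p ∈ C, bowenBall T p.1 p.2 ε) :
    bowenH T Z s ε n ≤ ∑' p : C, ENNReal.ofReal (Real.exp (-s * ((p : X × ℕ).2 : ℝ))) := by
  unfold bowenH
  exact iInf_le_of_le C <| iInf_le_of_le hC <| iInf_le_of_le hn <| iInf_le_of_le hZ le_rfl

theorem bowenEntropy_le_of_forall_bowenH_eq_zero [PseudoMetricSpace X] (T : X → X) (Z : Set X)
    (t : ℝ≥0∞) (h : ∀ s : ℝ≥0, t < s → ∀ ε > 0, ∀ n, bowenH T Z s ε n = 0) :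
    bowenEntropy T Z ≤ t := by
  refine iSup_le fun ε => iSup_le fun hε => le_of_forall_gt fun u hu => ?_
  obtain ⟨s, hts, hsu⟩ := ENNReal.lt_iff_exists_nnreal_btwn.1 hu
  have hs : s ∈ {s : ℝ≥0 | (⨆ n, bowenH T Z (s : ℝ) ε n) = 0} := by simp [h s hts ε hε]
  exact (sInf_le (mem_image_of_mem _ hs)).trans_lt hsu

theorem bowenH_le_tsum [PseudoMetricSpace X] (T : X → X) {Z : Set X} (s ε : ℝ) (n : ℕ)
    {ι : Type*} [Countable ι] (g : ι → X × ℕ) (hn : ∀ i, n ≤ (g i).2)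
    (hZ : Z ⊆ ⋃ i, bowenBall T (g i).1 (g i).2 ε) :
    bowenH T Z s ε n ≤ ∑' i, ENNReal.ofReal (Real.exp (-s * ((g i).2 : ℝ))) := by
  refine (bowenH_le_of_cover T s ε n (countable_range g) (forall_mem_range.2 hn)
    (by rwa [biUnion_range])).trans ?_
  refine le_trans (le_of_eq (tsum_congr fun p => ?_)) (ENNReal.tsum_comp_le_tsum_of_injective
    (rangeSplitting_injective g) fun i => ENNReal.ofReal (Real.exp (-s * ((g i).2 : ℝ))))
  rw [apply_rangeSplitting g p]

theorem bowenH_iUnion_eq_zero [PseudoMetricSpace X] (T : X → X) (s ε : ℝ) (n : ℕ)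
    {ι : Type*} [Countable ι] (Y : ι → Set X) (h : ∀ i, bowenH T (Y i) s ε n = 0) :
    bowenH T (⋃ i, Y i) s ε n = 0 := by
  refine le_antisymm (ENNReal.le_of_forall_pos_le_add fun η hη _ => ?_) zero_le
  obtain ⟨δ, hδ, hsum⟩ := ENNReal.exists_pos_sum_of_countable (ENNReal.coe_pos.2 hη).ne' ι
  have key : ∀ i, ∃ C : Set (X × ℕ), C.Countable ∧ (∀ p ∈ C, n ≤ p.2) ∧
      (Y i ⊆ ⋃ p ∈ C, bowenBall T p.1 p.2 ε) ∧
      ∑' p : C, ENNReal.ofReal (Real.exp (-s * ((p : X × ℕ).2 : ℝ))) < δ i := by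
    intro i
    have hi : bowenH T (Y i) s ε n < δ i := by
      rw [h i]; exact ENNReal.coe_pos.2 (hδ i)
    simpa only [bowenH, iInf_lt_iff, exists_prop] using hi
  choose C hC hCn hCY hCs using key
  have hcount : (⋃ i, C i).Countable := countable_iUnion hC
  rw [zero_add]
  refine (bowenH_le_of_cover T s ε n hcount ?_ ?_).trans ((ENNReal.tsum_iUnion_le_tsum
      (fun p : X × ℕ => ENNReal.ofReal (Real.exp (-s * (p.2 : ℝ)))) C).trans
    ((ENNReal.tsum_le_tsum fun i => (hCs i).le).trans hsum.le))
  · intro p hp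
    obtain ⟨i, hi⟩ := mem_iUnion.1 hp
    exact hCn i p hi
  · refine iUnion_subset fun i => (hCY i).trans ?_
    exact biUnion_subset_biUnion_left (subset_iUnion C i)

/-- A set whose points lie, for infinitely many `K`, in one of at most `M * exp (K * m * c)` cells
of small `K * m`-th Bowen diameter has entropy at most `c`. -/
theorem bowenH_eq_zero_of_frequently_mem [PseudoMetricSpace X] (T : X → X) {Y : Set X}
    {s ε c M : ℝ} (hcs : c < s) {m : ℕ} (hm : 0 < m) (D : ℕ → Type*) [∀ K, Fintype (D K)]
    (cell : ∀ K, D K → Set X)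
    (hdiam : ∀ K d, ∀ x ∈ cell K d, ∀ y ∈ cell K d, y ∈ bowenBall T x (K * m) ε)
    (hcard : ∀ K, (Fintype.card (D K) : ℝ) ≤ M * Real.exp (K * m * c))
    (hY : ∀ x ∈ Y, ∃ᶠ K in atTop, ∃ d, x ∈ cell K d) (n : ℕ) : bowenH T Y s ε n = 0 := by
  set ρ : ℝ := Real.exp (-((s - c) * m)) with hρ
  have hρ0 : 0 < ρ := Real.exp_pos _
  have hρ1 : ρ < 1 := by
    have : (0 : ℝ) < m := by exact_mod_cast hm
    rw [hρ, Real.exp_lt_one_iff]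
    nlinarith
  have hM : 0 ≤ M := by
    have := (Nat.cast_nonneg _).trans (hcard 0)
    simpa using this
  have hfin : ∑' k : ℕ, ENNReal.ofReal (M * ρ ^ k) ≠ ∞ :=
    ((summable_geometric_of_lt_one hρ0.le hρ1).mul_left M).tsum_ofReal_ne_top
  have hlim := ENNReal.tendsto_sum_nat_add _ hfin
  refine le_antisymm (ge_of_tendsto hlim ?_) zero_le
  filter_upwards [eventually_ge_atTop n] with N hN
  classical
  let ι := Σ k : ℕ, {d : D (k + N) // (cell (k + N) d).Nonempty}
  have : Countable ι := inferInstance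
  refine (bowenH_le_tsum T s ε n (fun i : ι => (i.2.2.some, (i.1 + N) * m)) ?_ ?_).trans ?_
  · rintro ⟨k, d⟩
    dsimp only
    nlinarith
  · intro x hx
    obtain ⟨K, hK, d, hd⟩ := (frequently_atTop.1 (hY x hx)) N
    obtain ⟨k, rfl⟩ := Nat.exists_eq_add_of_le' hK
    refine mem_iUnion.2 ⟨⟨k, d, ⟨x, hd⟩⟩, ?_⟩
    exact hdiam _ d _ (Set.Nonempty.some_mem _) x hd
  · rw [ENNReal.tsum_sigma']
    refine ENNReal.tsum_le_tsum fun k => ?_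
    dsimp only
    rw [tsum_fintype, Finset.sum_const, nsmul_eq_mul, Finset.card_univ,
      ← ENNReal.ofReal_natCast, ← ENNReal.ofReal_mul (Nat.cast_nonneg _)]
    refine ENNReal.ofReal_le_ofReal ?_
    have h1 : (Fintype.card {d : D (k + N) // (cell (k + N) d).Nonempty} : ℝ) ≤
        M * Real.exp ((k + N : ℕ) * m * c) :=
      (Nat.cast_le.2 (Fintype.card_subtype_le _)).trans (hcard _)
    refine (mul_le_mul_of_nonneg_right h1 (Real.exp_pos _).le).trans (le_of_eq ?_)
    rw [mul_assoc, ← Real.exp_add, hρ, ← Real.exp_nat_mul]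
    congr 2
    push_cast
    ring

/-! ### Counting words -/

theorem sum_exp_neg_sum_le_one {W : Type*} [Fintype W] (L : W → ℝ)
    (hL : ∑ w, Real.exp (-L w) ≤ 1) (K : ℕ) :
    ∑ v : Fin K → W, Real.exp (-∑ k, L (v k)) ≤ 1 := by
  have h : ∀ v : Fin K → W, Real.exp (-∑ k, L (v k)) = ∏ k, Real.exp (-L (v k)) := fun v => by
    rw [← Finset.sum_neg_distrib, Real.exp_sum]
  simp_rw [h]
  rw [← Fintype.sum_pow (fun w => Real.exp (-L w)) K]
  exact pow_le_one₀ (Finset.sum_nonneg fun _ _ => (Real.exp_pos _).le) hL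

theorem card_sum_le_exp {W : Type*} [Fintype W] (L : W → ℝ) (hL : ∑ w, Real.exp (-L w) ≤ 1)
    (K : ℕ) (B : ℝ) :
    (Nat.card {v : Fin K → W // ∑ k, L (v k) ≤ B} : ℝ) ≤ Real.exp B := by
  classical
  obtain ⟨F, hF⟩ : ∃ F : Finset (Fin K → W), F = Finset.univ.filter fun v => ∑ k, L (v k) ≤ B :=
    ⟨_, rfl⟩
  have hcard : Nat.card {v : Fin K → W // ∑ k, L (v k) ≤ B} = F.card := by
    rw [Nat.card_eq_fintype_card, Fintype.card_subtype, hF]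
  have hmem : ∀ v ∈ F, (1 : ℝ) ≤ Real.exp B * Real.exp (-∑ k, L (v k)) := by
    intro v hv
    rw [hF, Finset.mem_filter] at hv
    rw [← Real.exp_add]
    exact Real.one_le_exp (by linarith [hv.2])
  rw [hcard]
  calc (F.card : ℝ) = ∑ v ∈ F, (1 : ℝ) := by simp
    _ ≤ ∑ v ∈ F, Real.exp B * Real.exp (-∑ k, L (v k)) := Finset.sum_le_sum hmem
    _ ≤ ∑ v : Fin K → W, Real.exp B * Real.exp (-∑ k, L (v k)) :=
        Finset.sum_le_sum_of_subset_of_nonneg (Finset.subset_univ _)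
          fun _ _ _ => mul_nonneg (Real.exp_pos _).le (Real.exp_pos _).le
    _ ≤ Real.exp B := by
        rw [← Finset.mul_sum]
        exact mul_le_of_le_one_right (Real.exp_pos _).le (sum_exp_neg_sum_le_one L hL K)

theorem sum_range_mul_eq_sum_sum (f : ℕ → ℝ) (K m : ℕ) :
    ∑ j ∈ Finset.range (K * m), f j =
      ∑ p ∈ Finset.range m, ∑ k ∈ Finset.range K, f (p + k * m) := by
  rw [Finset.sum_comm]
  induction K with
  | zero => simp
  | succ K ih =>
    rw [add_mul, one_mul, Finset.sum_range_add, ih, Finset.sum_range_succ]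
    simp [add_comm]

/-- Among the `m` residue classes, one carries at most the average of a sum over `K * m` terms. -/
theorem exists_residue_sum_le (f : ℕ → ℝ) (K : ℕ) {m : ℕ} (hm : 0 < m) {B : ℝ}
    (h : ∑ j ∈ Finset.range (K * m), f j ≤ m * B) :
    ∃ p < m, ∑ k ∈ Finset.range K, f (p + k * m) ≤ B := by
  rw [sum_range_mul_eq_sum_sum] at h
  obtain ⟨p, hp, hpB⟩ := Finset.exists_le_of_sum_le (s := Finset.range m)
    (f := fun p => ∑ k ∈ Finset.range K, f (p + k * m)) (g := fun _ => B)
    ⟨0, Finset.mem_range.2 hm⟩ (by simpa using h)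
  exact ⟨p, Finset.mem_range.1 hp, hpB⟩

/-- Points that follow, along a cover by sets of diameter less than `ε`, itineraries of low average
cost infinitely often form a set of small entropy. -/
theorem bowenH_eq_zero_of_itinerary [PseudoMetricSpace X] (T : X → X) {A : Type*} [Fintype A]
    (U : A → Set X) {ε : ℝ} (hU : ∀ i, ∀ x ∈ U i, ∀ y ∈ U i, dist x y < ε) {m : ℕ} (hm : 0 < m)
    (L : (Fin m → A) → ℝ) (hL : ∑ w, Real.exp (-L w) ≤ 1) {c s : ℝ} (hcs : c < s) (n : ℕ) :
    bowenH T {x | ∃ a : ℕ → A, (∀ j, T^[j] x ∈ U (a j)) ∧ ∃ᶠ K : ℕ in atTop,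
      ∑ j ∈ Finset.range (K * m), L (fun i => a (j + i)) ≤ m * (K * m * c)} s ε n = 0 := by
  classical
  refine bowenH_eq_zero_of_frequently_mem T (M := m * Fintype.card A ^ m) hcs hm
    (fun K => Fin m × (Fin m → A) × {v : Fin K → Fin m → A // ∑ k, L (v k) ≤ K * m * c})
    (fun K d => {x | (∀ i : Fin m, T^[i] x ∈ U (d.2.1 i)) ∧
      ∀ (k : Fin K) (i : Fin m), T^[d.1 + k * m + i] x ∈ U (d.2.2.1 k i)}) ?_ ?_ ?_ n
  · rintro K ⟨p, u, v⟩ x ⟨hxu, hxv⟩ y ⟨hyu, hyv⟩ j hj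
    by_cases hjp : j < p
    · have hjm : j < m := hjp.trans p.2
      exact hU _ _ (hxu ⟨j, hjm⟩) _ (hyu ⟨j, hjm⟩)
    · have hdiv : (j - p) / m < K := by
        rw [Nat.div_lt_iff_lt_mul hm]; omega
      have hmod : (j - p) % m < m := Nat.mod_lt _ hm
      have hj' : (p : ℕ) + (j - p) / m * m + (j - p) % m = j := by
        have := Nat.div_add_mod' (j - p) m
        omega
      have h1 := hxv ⟨_, hdiv⟩ ⟨_, hmod⟩
      have h2 := hyv ⟨_, hdiv⟩ ⟨_, hmod⟩
      dsimp only at h1 h2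
      rw [hj'] at h1 h2
      exact hU _ _ h1 _ h2
  · intro K
    have := card_sum_le_exp L hL K (K * m * c)
    rw [Nat.card_eq_fintype_card] at this
    rw [Fintype.card_prod, Fintype.card_prod, Fintype.card_fun, Fintype.card_fin]
    push_cast
    rw [← mul_assoc]
    exact mul_le_mul_of_nonneg_left this (by positivity)
  · rintro x ⟨a, haU, hfreq⟩
    refine hfreq.mono fun K hK => ?_
    obtain ⟨p, hp, hpB⟩ := exists_residue_sum_le _ K hm hK
    refine ⟨⟨⟨p, hp⟩, fun i => a i, fun k i => a (p + k * m + i), ?_⟩, fun i => haU _,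
      fun k i => haU _⟩
    rwa [Finset.sum_range] at hpB

/-! ### Approximating a distribution by rational code lengths -/

/-- A finite distribution of Shannon entropy less than `C` admits rational code lengths satisfying
Kraft's inequality whose mean is less than `C`. -/
theorem exists_rat_code_length {W : Type*} [Fintype W] (p : W → ℝ) (hp : ∀ w, 0 ≤ p w)
    (hp1 : ∑ w, p w = 1) {C : ℝ} (hC : ∑ w, Real.negMulLog (p w) < C) :
    ∃ L : W → ℚ, ∑ w, Real.exp (-(L w : ℝ)) ≤ 1 ∧ ∑ w, p w * (L w : ℝ) < C := by
  have hW : Nonempty W := by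
    by_contra h
    rw [not_nonempty_iff] at h
    simp at hp1
  obtain ⟨N, hN⟩ : ∃ N : ℝ, N = (Fintype.card W : ℝ) := ⟨_, rfl⟩
  have hN0 : 0 < N := by rw [hN]; exact_mod_cast Fintype.card_pos (α := W)
  obtain ⟨δ, hδ, hδC⟩ : ∃ δ > 0, ∑ w, Real.negMulLog (p w) + 2 * δ < C :=
    ⟨(C - ∑ w, Real.negMulLog (p w)) / 3, by linarith, by linarith⟩
  set η : ℝ := δ / N with hη
  have hη0 : 0 < η := div_pos hδ hN0
  have hpη : ∀ w, 0 < p w + η := fun w => by linarith [hp w]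
  choose L hL1 hL2 using fun w => exists_rat_btwn
    (show Real.log (1 + δ) - Real.log (p w + η) < Real.log (1 + δ) - Real.log (p w + η) + δ by
      linarith)
  refine ⟨L, ?_, ?_⟩
  · calc ∑ w, Real.exp (-(L w : ℝ)) ≤ ∑ w, (p w + η) / (1 + δ) := by
          refine Finset.sum_le_sum fun w _ => ?_
          calc Real.exp (-(L w : ℝ)) ≤ Real.exp (Real.log (p w + η) - Real.log (1 + δ)) :=
                Real.exp_le_exp.2 (by linarith [hL1 w])
            _ = (p w + η) / (1 + δ) := by
                rw [Real.exp_sub, Real.exp_log (hpη w), Real.exp_log (by linarith)]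
      _ = 1 := by
          rw [← Finset.sum_div, Finset.sum_add_distrib, hp1, Finset.sum_const, nsmul_eq_mul,
            Finset.card_univ, ← hN, hη, mul_div_cancel₀ _ hN0.ne', div_self (by linarith)]
  · refine lt_of_le_of_lt ?_ hδC
    calc ∑ w, p w * (L w : ℝ) ≤ ∑ w, (Real.negMulLog (p w) + p w * (2 * δ)) := by
          refine Finset.sum_le_sum fun w _ => ?_
          have h1 : Real.log (1 + δ) ≤ δ := by
            linarith [Real.log_le_sub_one_of_pos (show 0 < 1 + δ by linarith)]
          rcases (hp w).eq_or_lt with h0 | h0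
          · simp [← h0]
          · have h2 : Real.log (p w) ≤ Real.log (p w + η) := Real.log_le_log h0 (by linarith)
            have h3 : (L w : ℝ) ≤ -Real.log (p w) + 2 * δ := by linarith [hL2 w]
            have := mul_le_mul_of_nonneg_left h3 h0.le
            rw [Real.negMulLog]
            linarith
      _ = ∑ w, Real.negMulLog (p w) + 2 * δ := by
          rw [Finset.sum_add_distrib, ← Finset.sum_mul, hp1, one_mul]

/-! ### Empirical measures and their limits -/

/-- The empirical measure `(1/(n+1)) Σ_{j ≤ n} δ_{T^j x}`. -/
noncomputable def empiricalMeasure [MeasurableSpace X] (T : X → X) (x : X) (n : ℕ) : Measure X :=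
  ((n + 1 : ℕ) : ℝ≥0∞)⁻¹ • ∑ j ∈ Finset.range (n + 1), Measure.dirac (T^[j] x)

instance [MeasurableSpace X] (T : X → X) (x : X) (n : ℕ) :
    IsProbabilityMeasure (empiricalMeasure T x n) where
  measure_univ := by
    rw [empiricalMeasure, Measure.smul_apply, Measure.finsetSum_apply]
    simp only [measure_univ, Finset.sum_const, Finset.card_range, nsmul_eq_mul, mul_one,
      smul_eq_mul]
    exact ENNReal.inv_mul_cancel (by simp) (ENNReal.natCast_ne_top _)

/-- The empirical measure as an element of the space of probability measures. -/
noncomputable def empiricalProbability [MeasurableSpace X] (T : X → X) (x : X) (n : ℕ) :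
    ProbabilityMeasure X :=
  ⟨empiricalMeasure T x n, inferInstance⟩

theorem coe_empiricalProbability [MeasurableSpace X] (T : X → X) (x : X) (n : ℕ) :
    (empiricalProbability T x n : Measure X) = empiricalMeasure T x n :=
  rfl

theorem integral_empiricalMeasure [MeasurableSpace X] (T : X → X) (x : X) (n : ℕ) {f : X → ℝ}
    (hf : StronglyMeasurable f) :
    ∫ y, f y ∂(empiricalMeasure T x n) =
      (∑ j ∈ Finset.range (n + 1), f (T^[j] x)) / ((n + 1 : ℕ) : ℝ) := by
  rw [empiricalMeasure, integral_smul_measure, integral_finsetSum_measure]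
  · simp_rw [integral_dirac' f _ hf]
    rw [ENNReal.toReal_inv, ENNReal.toReal_natCast, smul_eq_mul, div_eq_inv_mul]
  · intro j _
    exact integrable_dirac' hf (by simp)

theorem real_empiricalMeasure [MeasurableSpace X] (T : X → X) (x : X) (n : ℕ) {E : Set X}
    (hE : MeasurableSet E) :
    (empiricalMeasure T x n).real E =
      (∑ j ∈ Finset.range (n + 1), E.indicator 1 (T^[j] x)) / ((n + 1 : ℕ) : ℝ) := by
  rw [← integral_indicator_one hE, integral_empiricalMeasure]
  exact stronglyMeasurable_one.indicator hE

/-- Weak limits of empirical measures are invariant. -/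
theorem measurePreserving_of_tendsto_empiricalMeasure [TopologicalSpace X]
    [MeasurableSpace X] [BorelSpace X] [HasOuterApproxClosed X] {T : X → X} (hT : Continuous T)
    (x : X) {φ : ℕ → ℕ} (hφ : StrictMono φ) (μ : ProbabilityMeasure X)
    (h : Tendsto (fun k => empiricalProbability T x (φ k)) atTop (𝓝 μ)) :
    MeasurePreserving T (μ : Measure X) μ := by
  refine ⟨hT.measurable, ?_⟩
  have : IsProbabilityMeasure ((μ : Measure X).map T) :=
    Measure.isProbabilityMeasure_map hT.aemeasurable
  refine ext_of_forall_integral_eq_of_IsFiniteMeasure fun f => ?_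
  rw [integral_map hT.aemeasurable f.continuous.aestronglyMeasurable]
  have h' := ProbabilityMeasure.tendsto_iff_forall_integral_tendsto.1 h
  have h1 := h' f
  have h2 := h' (f.compContinuous ⟨T, hT⟩)
  simp only [coe_empiricalProbability, BoundedContinuousFunction.compContinuous_apply,
    ContinuousMap.coe_mk] at h1 h2
  refine tendsto_nhds_unique h2 ?_
  have h3 : Tendsto (fun k => (f (T^[φ k + 1] x) - f x) / ((φ k + 1 : ℕ) : ℝ)) atTop (𝓝 0) := by
    refine squeeze_zero_norm (a := fun k => 2 * ‖f‖ / ((φ k + 1 : ℕ) : ℝ)) (fun k => ?_) ?_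
    · rw [norm_div, Real.norm_natCast]
      gcongr
      calc ‖f (T^[φ k + 1] x) - f x‖ ≤ ‖f (T^[φ k + 1] x)‖ + ‖f x‖ := norm_sub_le _ _
        _ ≤ 2 * ‖f‖ := by linarith [f.norm_coe_le_norm (T^[φ k + 1] x), f.norm_coe_le_norm x]
    · exact tendsto_const_nhds.div_atTop (tendsto_natCast_atTop_atTop.comp
        (tendsto_atTop_mono (fun k => Nat.le_succ _) hφ.tendsto_atTop))
  have h4 := h1.add h3
  rw [add_zero] at h4
  refine h4.congr fun k => ?_
  rw [integral_empiricalMeasure T x _ f.continuous.measurable.stronglyMeasurable,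
    integral_empiricalMeasure T x _ (f := fun y => f (T y))
      (f.continuous.comp hT).measurable.stronglyMeasurable, ← add_div]
  congr 1
  have e1 := Finset.sum_range_succ (fun j => f (T^[j] x)) (φ k + 1)
  have e2 := Finset.sum_range_succ' (fun j => f (T^[j] x)) (φ k + 1)
  simp only [Function.iterate_succ_apply', Function.iterate_zero, id] at e1 e2 ⊢
  linarith

theorem exists_tendsto_empiricalMeasure [MetricSpace X] [CompactSpace X] [MeasurableSpace X]
    [BorelSpace X] {T : X → X} (hT : Continuous T) (x : X) :
    ∃ (μ : ProbabilityMeasure X) (φ : ℕ → ℕ), StrictMono φ ∧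
      MeasurePreserving T (μ : Measure X) μ ∧
      Tendsto (fun k => empiricalProbability T x (φ k)) atTop (𝓝 μ) := by
  obtain ⟨μ, φ, hφ, h⟩ := CompactSpace.tendsto_subseq (empiricalProbability T x)
  exact ⟨μ, φ, hφ, measurePreserving_of_tendsto_empiricalMeasure hT x hφ μ h, h⟩

/-! ### Cylinders of a finite partition -/

/-- The set of points whose `P`-itinerary starts with the word `w`. -/
def wordCylinder {A : Type*} (T : X → X) (P : X → A) {m : ℕ} (w : Fin m → A) : Set X :=
  {y | (fun i : Fin m => P (T^[i] y)) = w}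

theorem mem_wordCylinder {A : Type*} {T : X → X} {P : X → A} {m : ℕ} {w : Fin m → A} {y : X} :
    y ∈ wordCylinder T P w ↔ (fun i : Fin m => P (T^[i] y)) = w :=
  Iff.rfl

theorem measurableSet_wordCylinder [MeasurableSpace X] {T : X → X} (hT : Measurable T) {A : Type*}
    [MeasurableSpace A] [MeasurableSingletonClass A] {P : X → A} (hP : Measurable P) {m : ℕ}
    (w : Fin m → A) : MeasurableSet (wordCylinder T P w) := by
  have : wordCylinder T P w = ⋂ i : Fin m, (P ∘ T^[i]) ⁻¹' {w i} := by
    ext y; simp [mem_wordCylinder, funext_iff]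
  rw [this]
  exact MeasurableSet.iInter fun i => (hP.comp (hT.iterate _)) (measurableSet_singleton _)

theorem sum_measureReal_wordCylinder [MeasurableSpace X] {T : X → X} (hT : Measurable T) {A : Type*}
    [Fintype A] [MeasurableSpace A] [MeasurableSingletonClass A] {P : X → A} (hP : Measurable P)
    (m : ℕ) (μ : Measure X) [IsProbabilityMeasure μ] :
    ∑ w : Fin m → A, μ.real (wordCylinder T P w) = 1 := by
  classical
  have hU : (⋃ w ∈ (Finset.univ : Finset (Fin m → A)), wordCylinder T P w) = univ := by
    ext y; simp [mem_wordCylinder]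
  rw [← measureReal_biUnion_finset _ fun w _ => measurableSet_wordCylinder hT hP w, hU,
    probReal_univ]
  intro v _ w _ hvw
  refine Set.disjoint_left.2 fun y hv hw => hvw ?_
  exact (mem_wordCylinder.1 hv).symm.trans (mem_wordCylinder.1 hw)

/-- A continuous-at-almost-every-point partition has cylinders with null boundary. -/
theorem measure_frontier_wordCylinder [TopologicalSpace X] [MeasurableSpace X] [BorelSpace X]
    {T : X → X} (hT : Continuous T) {μ : Measure X} (hμ : MeasurePreserving T μ μ)
    {A : Type*} {P : X → A} {N : Set X} (hN : μ N = 0) (hNm : MeasurableSet N)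
    (hP : ∀ y ∉ N, ∀ᶠ z in 𝓝 y, P z = P y) {m : ℕ} (w : Fin m → A) :
    μ (frontier (wordCylinder T P w)) = 0 := by
  have hsub : frontier (wordCylinder T P w) ⊆ ⋃ i : Fin m, T^[i] ⁻¹' N := by
    intro y hy
    by_contra hyN
    simp only [mem_iUnion, mem_preimage, not_exists] at hyN
    have hev : ∀ᶠ z in 𝓝 y, (z ∈ wordCylinder T P w ↔ y ∈ wordCylinder T P w) := by
      have : ∀ᶠ z in 𝓝 y, ∀ i : Fin m, P (T^[i] z) = P (T^[i] y) :=
        eventually_all.2 fun i => (hT.iterate i).continuousAt.eventually (hP _ (hyN i))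
      filter_upwards [this] with z hz
      simp only [mem_wordCylinder, hz]
    rw [frontier_eq_closure_inter_closure] at hy
    obtain ⟨z, hz, hz'⟩ := ((mem_closure_iff_frequently.1 hy.1).and_eventually hev).exists
    obtain ⟨z2, hz2, hz2'⟩ := ((mem_closure_iff_frequently.1 hy.2).and_eventually hev).exists
    exact hz2 (hz2'.2 (hz'.1 hz))
  refine measure_mono_null hsub (measure_iUnion_null fun i => ?_)
  rw [(hμ.iterate i).measure_preimage hNm.nullMeasurableSet, hN]

/-- If `h_μ < c`, then some block length `m` has block entropy less than `m * c`. -/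
theorem exists_block_entropy_lt [MeasurableSpace X] {T : X → X} (μ : Measure X)
    [IsProbabilityMeasure μ] {r : ℕ} {P : X → Fin r} (hP : Measurable P) {c : ℝ≥0}
    (h : ksEntropy T μ < c) :
    ∃ m : ℕ, 0 < m ∧ ∑ w : Fin m → Fin r, Real.negMulLog (μ.real (wordCylinder T P w)) < m * c := by
  have h1 : Filter.atTop.liminf (fun n : ℕ => partInfo T μ (fun y => (P y : ℕ)) n / (n : ℝ≥0∞))
      < c := by
    refine lt_of_le_of_lt ?_ h
    refine le_iSup_of_le (fun y => (P y : ℕ)) (le_iSup_of_le ?_ (le_iSup_of_le ?_ le_rfl))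
    · exact (measurable_of_countable (fun i : Fin r => (i : ℕ))).comp hP
    · exact (Set.finite_lt_nat r).subset (range_subset_iff.2 fun y => (P y).2)
  obtain ⟨m, hm, hm0⟩ := ((frequently_lt_of_liminf_lt (by isBoundedDefault) h1).and_eventually
    (eventually_gt_atTop 0)).exists
  refine ⟨m, hm0, ?_⟩
  have hinj : Function.Injective
      (fun w : Fin m → Fin r => List.ofFn fun i => (w i : ℕ)) := by
    intro v w hvw
    have := List.ofFn_injective hvw
    funext i
    exact Fin.ext (congrFun this i)
  have hcyl : ∀ w : Fin m → Fin r, wordCylinder T P w =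
      (fun y => (List.range m).map fun j => (P (T^[j] y) : ℕ)) ⁻¹'
        {List.ofFn fun i => (w i : ℕ)} := by
    intro w
    ext y
    have : (List.range m).map (fun j => (P (T^[j] y) : ℕ)) =
        List.ofFn fun i : Fin m => (P (T^[i] y) : ℕ) := by
      rw [List.ofFn_eq_map, ← List.map_coe_finRange_eq_range, List.map_map]
      rfl
    simp only [mem_wordCylinder, mem_preimage, mem_singleton_iff, this,
      List.ofFn_injective.eq_iff, funext_iff, Fin.ext_iff]
  have hle : ENNReal.ofReal (∑ w : Fin m → Fin r, Real.negMulLog (μ.real (wordCylinder T P w))) ≤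
      partInfo T μ (fun y => (P y : ℕ)) m := by
    rw [ENNReal.ofReal_sum_of_nonneg fun w _ =>
      Real.negMulLog_nonneg measureReal_nonneg measureReal_le_one,
      ← tsum_fintype (L := .unconditional _)]
    refine le_trans (le_of_eq (tsum_congr fun w => ?_))
      (ENNReal.tsum_comp_le_tsum_of_injective hinj _)
    simp only [hcyl, Measure.real]
  have hm0' : (m : ℝ≥0∞) ≠ 0 := by exact_mod_cast hm0.ne'
  rw [ENNReal.div_lt_iff (Or.inl hm0') (Or.inl (ENNReal.natCast_ne_top m))] at hm
  have h2 := hle.trans_lt hm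
  rw [← ENNReal.ofReal_coe_nnreal, ← ENNReal.ofReal_natCast, 
    ← ENNReal.ofReal_mul c.coe_nonneg] at h2
  have h3 := (ENNReal.ofReal_lt_ofReal_iff_of_nonneg
    (Finset.sum_nonneg fun w _ =>
      Real.negMulLog_nonneg measureReal_nonneg measureReal_le_one)).1 h2
  linarith

/-- A finite open cover is refined by a measurable partition that is locally constant off the
boundaries of the members of the cover. -/
theorem exists_partition_subordinate [TopologicalSpace X] [MeasurableSpace X] [BorelSpace X]
    {A : Type*} [Finite A] [MeasurableSpace A] (V : A → Set X) (hV : ∀ i, IsOpen (V i))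
    (hcov : ∀ y, ∃ i, y ∈ V i) :
    ∃ P : X → A, Measurable P ∧ (∀ y, y ∈ V (P y)) ∧
      ∀ y ∉ ⋃ i, frontier (V i), ∀ᶠ z in 𝓝 y, P z = P y := by
  classical
  rcases isEmpty_or_nonempty X with hX | ⟨⟨x₀⟩⟩
  · exact ⟨fun y => isEmptyElim y, measurable_of_empty _, fun y => isEmptyElim y,
      fun y => isEmptyElim y⟩
  let F : (A → Prop) → A := fun g => if h : ∃ i, g i then h.choose else (hcov x₀).choose
  have hF : ∀ g : A → Prop, (∃ i, g i) → g (F g) := by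
    intro g hg
    simp only [F, dif_pos hg]
    exact hg.choose_spec
  refine ⟨fun y => F fun i => y ∈ V i, ?_, fun y => hF _ (hcov y), fun y hy => ?_⟩
  · exact (measurable_of_countable F).comp
      (measurable_pi_lambda _ fun i => (hV i).measurableSet.mem)
  · have : ∀ᶠ z in 𝓝 y, ∀ i, (z ∈ V i ↔ y ∈ V i) := by
      refine eventually_all.2 fun i => ?_
      have hyi : y ∉ frontier (V i) := fun h => hy (mem_iUnion.2 ⟨i, h⟩)
      by_cases hi : y ∈ V i
      · filter_upwards [(hV i).mem_nhds hi] with z hz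
        exact iff_of_true hz hi
      · have hcl : y ∉ closure (V i) := fun h => hyi ⟨h, fun h' => hi (interior_subset h')⟩
        filter_upwards [isClosed_closure.isOpen_compl.mem_nhds hcl] with z hz
        exact iff_of_false (fun h => hz (subset_closure h)) hi
    filter_upwards [this] with z hz
    simp only [hz]

/-! ### Bowen's entropy bound -/

theorem frequently_sum_range_mul_le {f : ℕ → ℝ} (hf : ∀ j, 0 ≤ f j) {u : ℕ → ℕ}
    (hu : Tendsto u atTop atTop) {l C : ℝ}
    (h : Tendsto (fun k => (∑ j ∈ Finset.range (u k), f j) / (u k : ℝ)) atTop (𝓝 l)) (hl : l < C)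
    {m : ℕ} (hm : 0 < m) :
    ∃ᶠ K : ℕ in atTop, ∑ j ∈ Finset.range (K * m), f j ≤ K * m * C := by
  have hl0 : 0 ≤ l := ge_of_tendsto' h fun k =>
    div_nonneg (Finset.sum_nonneg fun j _ => hf j) (Nat.cast_nonneg _)
  obtain ⟨l', hll', hl'C⟩ := exists_between hl
  have hK : Tendsto (fun k => u k / m) atTop atTop :=
    (Nat.tendsto_div_const_atTop hm.ne').comp hu
  have hKC : ∀ᶠ K : ℕ in atTop, l' / (C - l') ≤ K :=
    tendsto_natCast_atTop_atTop.eventually_ge_atTop _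
  refine hK.frequently (Eventually.frequently ?_)
  filter_upwards [h.eventually_le_const hll', hu.eventually_gt_atTop 0, hK.eventually hKC]
    with k hk hk0 hkC
  have hk0' : (0 : ℝ) < u k := by exact_mod_cast hk0
  rw [div_le_iff₀ hk0'] at hk
  rw [div_le_iff₀ (by linarith)] at hkC
  have hlt : (u k : ℝ) ≤ ((u k / m : ℕ) + 1) * m := by
    exact_mod_cast (Nat.lt_mul_of_div_lt (Nat.lt_succ_self (u k / m)) hm).le
  have hm' : (0 : ℝ) < m := by exact_mod_cast hm
  calc ∑ j ∈ Finset.range (u k / m * m), f j ≤ ∑ j ∈ Finset.range (u k), f j :=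
        Finset.sum_le_sum_of_subset_of_nonneg
          (Finset.range_subset_range.2 (Nat.div_mul_le_self _ _)) fun j _ _ => hf j
    _ ≤ l' * u k := hk
    _ ≤ l' * (((u k / m : ℕ) + 1) * m) := by gcongr; linarith
    _ ≤ (u k / m : ℕ) * m * C := by nlinarith

theorem sum_word_div_eq_sum_real_empiricalMeasure [MeasurableSpace X] {T : X → X}
    (hT : Measurable T) {A : Type*} [Fintype A] [MeasurableSpace A] [MeasurableSingletonClass A]
    {P : X → A} (hP : Measurable P) {m : ℕ} (L : (Fin m → A) → ℝ) (x : X) (n : ℕ) :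
    (∑ j ∈ Finset.range (n + 1), L (fun i => P (T^[j + i] x))) / ((n + 1 : ℕ) : ℝ) =
      ∑ w, (empiricalMeasure T x n).real (wordCylinder T P w) * L w := by
  classical
  simp_rw [fun w => real_empiricalMeasure T x n (measurableSet_wordCylinder hT hP w),
    div_mul_eq_mul_div, ← Finset.sum_div, Finset.sum_mul]
  rw [Finset.sum_comm]
  congr 1
  refine Finset.sum_congr rfl fun j _ => ?_
  rw [Finset.sum_eq_single (fun i : Fin m => P (T^[j + i] x))]
  · rw [indicator_of_mem, Pi.one_apply, one_mul]
    simp only [mem_wordCylinder, ← Function.iterate_add_apply, add_comm]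
  · intro w _ hw
    rw [indicator_of_notMem, zero_mul]
    intro h
    apply hw
    rw [← mem_wordCylinder.1 h]
    simp only [← Function.iterate_add_apply, add_comm]
  · simp

/-- Bowen's bound: if every point of `Z` has a limit measure of entropy less than `c`, then `Z`
has topological entropy at most `c`. -/
theorem bowenH_eq_zero_of_limit_entropy_lt [MetricSpace X] [CompactSpace X] [MeasurableSpace X]
    [BorelSpace X] {T : X → X} (hT : Continuous T) {Z : Set X} {c : ℝ≥0} {s : ℝ} (hcs : c < s)
    (hZ : ∀ x ∈ Z, ∃ (μ : ProbabilityMeasure X) (φ : ℕ → ℕ), StrictMono φ ∧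
      MeasurePreserving T (μ : Measure X) μ ∧
      Tendsto (fun k => empiricalProbability T x (φ k)) atTop (𝓝 μ) ∧
      ksEntropy T (μ : Measure X) < c)
    {ε : ℝ} (hε : 0 < ε) (n : ℕ) : bowenH T Z s ε n = 0 := by
  obtain ⟨t, -, htfin, ht⟩ := (isCompact_univ (X := X)).finite_cover_balls
    (show 0 < ε / 4 by linarith)
  obtain ⟨r, y, -, hy⟩ := htfin.fin_param
  have hcov : ∀ z, ∃ i, z ∈ Metric.ball (y i) (ε / 4) := by
    intro z
    obtain ⟨q, hq, hz⟩ := mem_iUnion₂.1 (ht (mem_univ z))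
    rw [← hy] at hq
    obtain ⟨i, rfl⟩ := hq
    exact ⟨i, hz⟩
  let ι := {q : Σ m : ℕ, (Fin m → Fin r) → ℚ //
    0 < q.1 ∧ ∑ w, Real.exp (-(q.2 w : ℝ)) ≤ 1}
  let Y : ι → Set X := fun q => {x | ∃ a : ℕ → Fin r,
    (∀ j, T^[j] x ∈ Metric.ball (y (a j)) (ε / 2)) ∧ ∃ᶠ K : ℕ in atTop,
      ∑ j ∈ Finset.range (K * q.1.1), (q.1.2 (fun i => a (j + i)) : ℝ) ≤
        q.1.1 * (K * q.1.1 * c)}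
  have hY : ∀ q, bowenH T (Y q) s ε n = 0 := by
    intro q
    refine bowenH_eq_zero_of_itinerary T (fun i => Metric.ball (y i) (ε / 2)) ?_ q.2.1
      (fun w => (q.1.2 w : ℝ)) q.2.2 hcs n
    intro i u hu v hv
    have := dist_triangle_right u v (y i)
    rw [Metric.mem_ball] at hu hv
    linarith
  have hsub : Z ⊆ ⋃ q, Y q := by
    intro x hx
    obtain ⟨μ, φ, hφ, hμ, hlim, hent⟩ := hZ x hx
    choose ρ hρ hρ0 using fun i => exists_null_frontier_thickening (μ : Measure X) {y i}
      (show ε / 4 < ε / 2 by linarith)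
    simp only [Metric.thickening_singleton] at hρ0
    obtain ⟨P, hPm, hPV, hPloc⟩ := exists_partition_subordinate
      (fun i => Metric.ball (y i) (ρ i)) (fun i => Metric.isOpen_ball)
      (fun z => (hcov z).imp fun i hi => Metric.ball_subset_ball (hρ i).1.le hi)
    obtain ⟨m, hm, hmc⟩ := exists_block_entropy_lt (μ : Measure X) hPm hent
    obtain ⟨L, hL1, hL2⟩ := exists_rat_code_length
      (fun w => (μ : Measure X).real (wordCylinder T P w)) (fun w => measureReal_nonneg)
      (sum_measureReal_wordCylinder hT.measurable hPm m _) hmc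
    refine mem_iUnion.2 ⟨⟨⟨m, L⟩, hm, hL1⟩, fun j => P (T^[j] x), fun j =>
      Metric.ball_subset_ball (hρ _).2.le (hPV _), ?_⟩
    have hL0 : ∀ w, (0 : ℝ) ≤ L w := by
      intro w
      have := (Finset.single_le_sum (f := fun w => Real.exp (-(L w : ℝ)))
        (fun w _ => (Real.exp_pos _).le) (Finset.mem_univ w)).trans hL1
      rw [Real.exp_le_one_iff] at this
      linarith
    have hconv : Tendsto (fun k => (∑ j ∈ Finset.range (φ k + 1),
        (L (fun i => P (T^[j + i] x)) : ℝ)) / ((φ k + 1 : ℕ) : ℝ)) atTop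
        (𝓝 (∑ w, (μ : Measure X).real (wordCylinder T P w) * (L w : ℝ))) := by
      simp_rw [fun k => sum_word_div_eq_sum_real_empiricalMeasure hT.measurable hPm
        (fun w => (L w : ℝ)) x (φ k)]
      refine tendsto_finsetSum _ fun w _ => Tendsto.mul_const _ ?_
      have hnull := measure_frontier_wordCylinder hT hμ (measure_iUnion_null hρ0)
        (MeasurableSet.iUnion fun i => isClosed_frontier.measurableSet) hPloc w
      exact (ENNReal.tendsto_toReal (measure_ne_top _ _)).comp
        (ProbabilityMeasure.tendsto_measure_of_null_frontier_of_tendsto' hlim hnull)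
    have hu : Tendsto (fun k => φ k + 1) atTop atTop :=
      tendsto_atTop_mono (fun k => Nat.le_succ _) hφ.tendsto_atTop
    refine (frequently_sum_range_mul_le (fun j => hL0 _) hu hconv hL2 hm).mono fun K hK => ?_
    refine hK.trans (le_of_eq ?_)
    dsimp only
    ring
  exact le_antisymm ((bowenH_mono T hsub s ε n).trans
    (bowenH_iUnion_eq_zero T s ε n Y hY).le) zero_le

/-! ### Birkhoff averages -/

theorem abs_birkhoff_le {T : X → X} {f : X → ℝ} {C : ℝ} (hC : ∀ x, |f x| ≤ C) (x : X) (n : ℕ) :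
    |(∑ j ∈ Finset.range n, f (T^[j] x)) / (n : ℝ)| ≤ C := by
  have hC0 : 0 ≤ C := (abs_nonneg _).trans (hC x)
  rw [abs_div, Nat.abs_cast]
  refine div_le_of_le_mul₀ (Nat.cast_nonneg _) hC0 ?_
  calc |∑ j ∈ Finset.range n, f (T^[j] x)| ≤ ∑ j ∈ Finset.range n, |f (T^[j] x)| :=
        Finset.abs_sum_le_sum_abs _ _
    _ ≤ ∑ j ∈ Finset.range n, C := Finset.sum_le_sum fun j _ => hC _
    _ = C * n := by simp [mul_comm]

theorem liminf_le_and_le_limsup_of_tendsto_comp {u : ℕ → ℝ} {C : ℝ} (hu : ∀ n, |u n| ≤ C)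
    {v : ℕ → ℕ} (hv : Tendsto v atTop atTop) {l : ℝ} (h : Tendsto (u ∘ v) atTop (𝓝 l)) :
    liminf u atTop ≤ l ∧ l ≤ limsup u atTop := by
  have hlow : ∀ n, -C ≤ u n := fun n => (abs_le.1 (hu n)).1
  have hupp : ∀ n, u n ≤ C := fun n => (abs_le.1 (hu n)).2
  constructor
  · by_contra! hlt
    obtain ⟨l', hl, hl'⟩ := exists_between hlt
    have h2 := eventually_lt_of_lt_liminf hl' (isBoundedUnder_of ⟨-C, hlow⟩)
    exact hl.not_ge (ge_of_tendsto h ((hv.eventually h2).mono fun _ hk => hk.le))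
  · by_contra! hlt
    obtain ⟨l', hl', hl⟩ := exists_between hlt
    have h2 := eventually_lt_of_limsup_lt hl' (isBoundedUnder_of ⟨C, hupp⟩)
    exact hl.not_ge (le_of_tendsto h ((hv.eventually h2).mono fun _ hk => hk.le))

/-- **Corollary 4.1.** For a saturated system and a uniformly bounded family `(Φ_i)_{i∈I}`
of continuous functions (`I` a set of positive integers), the Bowen entropy of
`S(a,b) = {x : a_i ≤ liminf A_nΦ_i(x) ≤ limsup A_nΦ_i(x) ≤ b_i  ∀ i ∈ I}` equals the
supremum of `h_μ` over invariant probability measures with `a_i ≤ ∫ Φ_i dμ ≤ b_i` for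
all `i ∈ I`. -/
theorem entropy_of_sandwich_set {X : Type*} [MetricSpace X] [CompactSpace X]
    [MeasurableSpace X] [BorelSpace X] (T : X → X) (hT : Continuous T) (hsat : Saturated T)
    (I : Set ℕ) (hI : ∀ i ∈ I, 1 ≤ i) (Φ : ℕ → X → ℝ)
    (hΦc : ∀ i ∈ I, Continuous (Φ i)) (hΦb : ∃ C : ℝ, ∀ i ∈ I, ∀ x, |Φ i x| ≤ C)
    (a b : ℕ → ℝ) :
    bowenEntropy T {x : X | ∀ i ∈ I,
        a i ≤ Filter.atTop.liminf
            (fun n : ℕ => (∑ j ∈ Finset.range n, Φ i (T^[j] x)) / (n : ℝ)) ∧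
        Filter.atTop.limsup
            (fun n : ℕ => (∑ j ∈ Finset.range n, Φ i (T^[j] x)) / (n : ℝ)) ≤ b i} =
      ⨆ μ ∈ {μ : Measure X | IsProbabilityMeasure μ ∧ MeasurePreserving T μ μ ∧
        ∀ i ∈ I, a i ≤ (∫ x, Φ i x ∂μ) ∧ (∫ x, Φ i x ∂μ) ≤ b i}, ksEntropy T μ := by
  obtain ⟨C, hC⟩ := hΦb
  refine le_antisymm ?_ ?_
  · refine bowenEntropy_le_of_forall_bowenH_eq_zero T _ _ fun s hs ε hε n => ?_
    obtain ⟨c, htc, hcs⟩ := ENNReal.lt_iff_exists_nnreal_btwn.1 hs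
    refine bowenH_eq_zero_of_limit_entropy_lt hT (c := c)
      (by exact_mod_cast hcs) (fun x hx => ?_) hε n
    obtain ⟨μ, φ, hφ, hμ, hlim⟩ := exists_tendsto_empiricalMeasure hT x
    refine ⟨μ, φ, hφ, hμ, hlim, lt_of_le_of_lt ?_ htc⟩
    refine le_iSup₂_of_le (μ : Measure X) ⟨inferInstance, hμ, fun i hi => ?_⟩ le_rfl
    have hconv := ProbabilityMeasure.tendsto_iff_forall_integral_tendsto.1 hlim
      (BoundedContinuousFunction.mkOfCompact ⟨Φ i, hΦc i hi⟩)
    simp only [coe_empiricalProbability, BoundedContinuousFunction.mkOfCompact_apply,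
      ContinuousMap.coe_mk] at hconv
    simp_rw [fun k => integral_empiricalMeasure T x (φ k)
      (hΦc i hi).measurable.stronglyMeasurable] at hconv
    have := liminf_le_and_le_limsup_of_tendsto_comp (abs_birkhoff_le (T := T) (hC i hi) x)
      (tendsto_atTop_mono (fun k => Nat.le_succ (φ k)) hφ.tendsto_atTop) hconv
    exact ⟨(hx i hi).1.trans this.1, this.2.trans (hx i hi).2⟩
  · refine iSup₂_le fun μ hμ => ?_
    obtain ⟨hprob, hinv, hint⟩ := hμ
    rw [← hsat μ hprob hinv]
    refine bowenEntropy_mono T fun x hx i hi => ?_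
    have h : Tendsto (fun n : ℕ => (∑ j ∈ Finset.range n, Φ i (T^[j] x)) / (n : ℝ)) atTop
        (𝓝 (∫ y, Φ i y ∂μ)) := hx ⟨Φ i, hΦc i hi⟩
    rw [h.liminf_eq, h.limsup_eq]
    exact hint i hi
end
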